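/- Let D be a dictionary in a real Hilbert space X whose symmetric convex hull co(D) is compact, and let f ∈ X with ‖f‖_{L1(D)} < ∞. Then any sequence (f_n) produced by the orthogonal greedy algorithm with target f satisfies ‖f − f_n‖ ≤ ((n! V_n)^{1/n} / √n) · ‖f‖_{L1(D)} · ε_n(co(D)) for all n ≥ 1. -/

import Mathlib

open scoped RealInnerProductSpace

/-- Dyadic entropy number: infimum of all `ε > 0` such that `K` is covered by `2^n`
balls of radius `ε`. -/
noncomputable def entropyNumber {X : Type*} [NormedAddCommGroup X] (n : ℕ) (K : Set X) : ℝ :=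
  sInf {ε : ℝ | 0 < ε ∧ ∃ c : Fin (2 ^ n) → X, K ⊆ ⋃ i, Metric.closedBall (c i) ε}

/-- Symmetric (absolutely) convex hull: closure of the set of finite sums `∑ cᵢ gᵢ`
with `gᵢ ∈ K` and `∑ |cᵢ| ≤ 1`. -/
noncomputable def symConvexHull {X : Type*} [NormedAddCommGroup X] [NormedSpace ℝ X]
    (K : Set X) : Set X :=
  closure {x : X | ∃ (m : ℕ) (c : Fin m → ℝ) (g : Fin m → X),
    (∀ i, g i ∈ K) ∧ (∑ i, |c i|) ≤ 1 ∧ x = ∑ i, c i • g i}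

/-- Volume of the unit Euclidean ball in `ℝⁿ`. -/
noncomputable def unitBallVol (n : ℕ) : ℝ :=
  Real.pi ^ ((n : ℝ) / 2) / Real.Gamma ((n : ℝ) / 2 + 1)

/-- Span of the first `n` terms of a sequence. -/
noncomputable def spanFirst {X : Type*} [NormedAddCommGroup X] [NormedSpace ℝ X]
    (f : ℕ → X) (n : ℕ) : Submodule ℝ X :=
  Submodule.span ℝ (f '' {i | i < n})

/-- The weak greedy algorithm with parameter `γ`: `f n` (the `(n+1)`-st iterate) lies in `K`
and its distance to the span of the previous iterates is at least `γ` times that of any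
other element of `K`. -/
def IsWeakGreedy {X : Type*} [NormedAddCommGroup X] [NormedSpace ℝ X]
    (γ : ℝ) (K : Set X) (f : ℕ → X) : Prop :=
  ∀ n : ℕ, f n ∈ K ∧ ∀ g ∈ K,
    γ * Metric.infDist g (spanFirst f n : Set X) ≤ Metric.infDist (f n) (spanFirst f n : Set X)

/-- The greedy error `σ_n(K) = sup_{f ∈ K} dist(f, span{f_1,…,f_n})`. -/
noncomputable def greedyError {X : Type*} [NormedAddCommGroup X] [NormedSpace ℝ X]
    (K : Set X) (f : ℕ → X) (n : ℕ) : ℝ :=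
  sSup ((fun g => Metric.infDist g (spanFirst f n : Set X)) '' K)

/-- Kolmogorov `n`-width. -/
noncomputable def kolmogorovWidth {X : Type*} [NormedAddCommGroup X] [NormedSpace ℝ X]
    (n : ℕ) (K : Set X) : ℝ :=
  sInf {d : ℝ | ∃ Y : Submodule ℝ X, FiniteDimensional ℝ Y ∧ Module.finrank ℝ Y ≤ n ∧
    d = sSup ((fun g => Metric.infDist g (Y : Set X)) '' K)}

/-- `f` admits an `ℓ¹` representation over the dictionary `D`. -/
def HasL1Rep {X : Type*} [NormedAddCommGroup X] [NormedSpace ℝ X] (D : Set X) (f : X) : Prop :=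
  ∃ (c : ℕ → ℝ) (g : ℕ → X), (∀ i, g i ∈ D) ∧ Summable (fun i => |c i|) ∧
    HasSum (fun i => c i • g i) f

/-- The variation norm `‖f‖_{L₁(D)}`. -/
noncomputable def varNorm {X : Type*} [NormedAddCommGroup X] [NormedSpace ℝ X]
    (D : Set X) (f : X) : ℝ :=
  sInf {t : ℝ | ∃ (c : ℕ → ℝ) (g : ℕ → X), (∀ i, g i ∈ D) ∧ Summable (fun i => |c i|) ∧
    HasSum (fun i => c i • g i) f ∧ t = ∑' i, |c i|}

/-- The orthogonal greedy algorithm with target `f`: `fa 0 = 0`; at each step `g n ∈ D`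
maximizes `|⟨g, f - fa n⟩|` over `D`, and `fa (n+1)` is the orthogonal projection of `f`
onto `span{g 0, …, g n}`. -/
def IsOGA {X : Type*} [NormedAddCommGroup X] [InnerProductSpace ℝ X]
    (D : Set X) (f : X) (g fa : ℕ → X) : Prop :=
  fa 0 = 0 ∧ ∀ n : ℕ,
    g n ∈ D ∧ (∀ h ∈ D, |⟪h, f - fa n⟫| ≤ |⟪g n, f - fa n⟫|) ∧
    fa (n + 1) ∈ Submodule.span ℝ (g '' {i | i ≤ n}) ∧
    ∀ w ∈ Submodule.span ℝ (g '' {i | i ≤ n}), ⟪f - fa (n + 1), w⟫ = 0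

/-- Best `n`-term approximation error `E_n(f, D)`. -/
noncomputable def bestNTermError {X : Type*} [NormedAddCommGroup X] [NormedSpace ℝ X]
    (D : Set X) (n : ℕ) (f : X) : ℝ :=
  sInf {r : ℝ | ∃ (c : Fin n → ℝ) (g : Fin n → X), (∀ i, g i ∈ D) ∧ r = ‖f - ∑ i, c i • g i‖}

/-- The K-functional `K(t, g)` between `X` and `L₁(D)`. -/
noncomputable def Kfunctional {X : Type*} [NormedAddCommGroup X] [NormedSpace ℝ X]
    (D : Set X) (t : ℝ) (gg : X) : ℝ :=
  sInf {s : ℝ | ∃ h : X, HasL1Rep D h ∧ s = ‖gg - h‖ + t * varNorm D h}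

/-- The interpolation norm `‖g‖_θ = sup_{t > 0} t^{-θ} K(t, g)`. -/
noncomputable def interpNorm {X : Type*} [NormedAddCommGroup X] [NormedSpace ℝ X]
    (D : Set X) (θ : ℝ) (gg : X) : ℝ :=
  sSup ((fun t => t ^ (-θ) * Kfunctional D t gg) '' Set.Ioi (0 : ℝ))

/-!
Let `r k` be the norm of the `k`-th residual, `M = varNorm D f` and `d k` the distance of `g k` to
the span of its predecessors, i.e. the norm of the `k`-th Gram–Schmidt vector. By greediness the
inner product of the residual with that vector is at least `r k ^ 2 / M` in absolute value, so
projecting along it gives `r (k + 1) ^ 2 ≤ r k ^ 2 - r k ^ 4 / (M * d k) ^ 2`. Passing to inverses,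
`∑ k < n, (M * d k)⁻² ≤ (r n)⁻²`, and the inequality of harmonic and geometric means yields
`(√n * r n) ^ n ≤ M ^ n * ∏ k < n, d k`.

The product of the `d k` is controlled by a volume comparison. In the coordinates of the normalized
Gram–Schmidt vectors, the projection of `symConvexHull D` contains a linear image of the
cross-polytope of volume `(2 ^ n / n!) * ∏ k < n, d k`, while a covering of `symConvexHull D` by
`2 ^ n` balls of radius `ε` bounds that volume by `2 ^ n * ε ^ n * unitBallVol n`.
-/

open MeasureTheory InnerProductSpace Metric

section Volume

variable {ι : Type*} [Fintype ι]

/-- The cross-polytope, i.e. the closed unit ball of the `ℓ¹` norm. It lives in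
`EuclideanSpace` so that its linear images can be compared with Euclidean balls. -/
def crossPolytope (ι : Type*) [Fintype ι] : Set (EuclideanSpace ℝ ι) :=
  {x | ∑ i, |x i| ≤ 1}

lemma volume_crossPolytope :
    volume (crossPolytope ι) =
      ENNReal.ofReal (2 ^ Fintype.card ι / (Fintype.card ι).factorial) := by
  rcases isEmpty_or_nonempty ι with _ | _
  · simp [crossPolytope, volume_euclideanSpace_eq_dirac]
  · have htoLp := (EuclideanSpace.volume_preserving_symm_measurableEquiv_toLp ι).symm
    rw [← htoLp.measure_preimage_equiv]
    simpa [crossPolytope, Real.Gamma_nat_eq_factorial, one_add_one_eq_two, Real.Gamma_two]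
      using volume_sum_rpow_le ι le_rfl 1

lemma volume_toEuclideanLin_image_crossPolytope [DecidableEq ι] (A : Matrix ι ι ℝ) :
    volume (A.toEuclideanLin '' crossPolytope ι) =
      ENNReal.ofReal (|A.det| * (2 ^ Fintype.card ι / (Fintype.card ι).factorial)) := by
  rw [Measure.addHaar_image_linearMap, volume_crossPolytope, Matrix.toEuclideanLin,
    Matrix.toLpLin_eq_toLin, LinearMap.det_toLin, ENNReal.ofReal_mul (abs_nonneg _)]

lemma unitBallVol_pos (n : ℕ) : 0 < unitBallVol n :=
  div_pos (Real.rpow_pos_of_pos Real.pi_pos _) (Real.Gamma_pos_of_pos (by positivity))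

lemma volume_closedBall_eq_unitBallVol (x : EuclideanSpace ℝ ι) {r : ℝ} (hr : 0 ≤ r) :
    volume (closedBall x r) =
      ENNReal.ofReal (r ^ Fintype.card ι * unitBallVol (Fintype.card ι)) := by
  rcases isEmpty_or_nonempty ι with _ | _
  · have huniv : closedBall x r = Set.univ :=
      Set.eq_univ_of_forall fun y => by simp [Subsingleton.elim y x, hr]
    simp [huniv, unitBallVol, volume_euclideanSpace_eq_dirac]
  · have hpi : √Real.pi ^ Fintype.card ι = Real.pi ^ ((Fintype.card ι : ℝ) / 2) := by
      rw [Real.sqrt_eq_rpow, ← Real.rpow_mul_natCast Real.pi_pos.le, one_div_mul_eq_div]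
    rw [EuclideanSpace.volume_closedBall, hpi, ← ENNReal.ofReal_pow hr,
      ← ENNReal.ofReal_mul (by positivity), unitBallVol]

lemma volume_le_of_subset_iUnion_closedBall {S : Set (EuclideanSpace ℝ ι)} {N : ℕ}
    {c : Fin N → EuclideanSpace ℝ ι} {ε : ℝ} (hε : 0 ≤ ε) (hS : S ⊆ ⋃ i, closedBall (c i) ε) :
    volume S ≤ ENNReal.ofReal (N * (ε ^ Fintype.card ι * unitBallVol (Fintype.card ι))) :=
  calc volume S ≤ ∑ i, volume (closedBall (c i) ε) :=
        (measure_mono hS).trans (measure_iUnion_fintype_le _ _)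
    _ = _ := by
        simp [volume_closedBall_eq_unitBallVol _ hε, ENNReal.ofReal_mul]

end Volume

section Coordinates

variable {X : Type*} [NormedAddCommGroup X] [InnerProductSpace ℝ X] {ι : Type*} [Fintype ι]

/-- The coordinates `x ↦ (⟪e i, x⟫)ᵢ` with respect to a family of vectors. When `e` is
orthonormal this is the orthogonal projection onto the span of `e`, read in coordinates. -/
noncomputable def innerCoords (e : ι → X) : X →ₗ[ℝ] EuclideanSpace ℝ ι :=
  (WithLp.linearEquiv 2 ℝ (ι → ℝ)).symm ∘ₗ LinearMap.pi fun i => innerₗ X (e i)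

lemma norm_innerCoords_le {e : ι → X} (he : Orthonormal ℝ e) (x : X) :
    ‖innerCoords e x‖ ≤ ‖x‖ := by
  refine (pow_le_pow_iff_left₀ (norm_nonneg _) (norm_nonneg _) two_ne_zero).1 ?_
  simpa [EuclideanSpace.norm_sq_eq, innerCoords] using
    he.sum_inner_products_le (x := x) (s := Finset.univ)

end Coordinates

section SymConvexHull

variable {X : Type*} [NormedAddCommGroup X] [NormedSpace ℝ X] {ι : Type*} [Fintype ι]
  {D : Set X} {v : ι → X}

lemma sum_smul_mem_symConvexHull (hv : ∀ i, v i ∈ D) {c : ι → ℝ} (hc : ∑ i, |c i| ≤ 1) :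
    ∑ i, c i • v i ∈ symConvexHull D := by
  let σ := (Fintype.equivFin ι).symm
  refine subset_closure ⟨Fintype.card ι, c ∘ σ, v ∘ σ, fun i => hv (σ i), ?_, ?_⟩
  · simpa using (σ.sum_comp fun i => |c i|).trans_le hc
  · exact (σ.sum_comp fun i => c i • v i).symm

lemma toEuclideanLin_image_crossPolytope_subset [DecidableEq ι] (T : X →ₗ[ℝ] EuclideanSpace ℝ ι)
    (hv : ∀ i, v i ∈ D) :
    (Matrix.of fun i j => T (v j) i).toEuclideanLin '' crossPolytope ι ⊆ T '' symConvexHull D := by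
  rintro _ ⟨x, hx, rfl⟩
  refine ⟨∑ i, x i • v i, sum_smul_mem_symConvexHull hv hx, ?_⟩
  ext i
  simp [Matrix.toLpLin_apply, Matrix.mulVec, dotProduct, mul_comm]

lemma abs_det_mul_le_of_subset_iUnion_closedBall [DecidableEq ι] {T : X →ₗ[ℝ] EuclideanSpace ℝ ι}
    (hT : ∀ x, ‖T x‖ ≤ ‖x‖) (hv : ∀ i, v i ∈ D)
    {N : ℕ} {c : Fin N → X} {ε : ℝ} (hε : 0 ≤ ε)
    (hc : symConvexHull D ⊆ ⋃ i, closedBall (c i) ε) :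
    |(Matrix.of fun i j => T (v j) i).det| *
        (2 ^ Fintype.card ι / (Fintype.card ι).factorial) ≤
      N * (ε ^ Fintype.card ι * unitBallVol (Fintype.card ι)) := by
  have hcover : T '' symConvexHull D ⊆ ⋃ i, closedBall (T (c i)) ε := by
    rintro _ ⟨x, hx, rfl⟩
    obtain ⟨i, hi⟩ := Set.mem_iUnion.1 (hc hx)
    refine Set.mem_iUnion.2 ⟨i, ?_⟩
    rw [mem_closedBall_iff_norm, ← map_sub]
    exact (hT _).trans (mem_closedBall_iff_norm.1 hi)
  have hV := unitBallVol_pos (Fintype.card ι)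
  rw [← ENNReal.ofReal_le_ofReal_iff (by positivity), ← volume_toEuclideanLin_image_crossPolytope]
  exact volume_le_of_subset_iUnion_closedBall hε
    ((toEuclideanLin_image_crossPolytope_subset T hv).trans hcover)

end SymConvexHull

section GramSchmidt

variable {𝕜 X ι : Type*} [RCLike 𝕜] [NormedAddCommGroup X] [InnerProductSpace 𝕜 X]
  [LinearOrder ι] [LocallyFiniteOrderBot ι] [WellFoundedLT ι]

lemma sub_gramSchmidt_mem_span (f : ι → X) (i : ι) :
    f i - gramSchmidt 𝕜 f i ∈ Submodule.span 𝕜 (f '' Set.Iio i) := by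
  rw [← span_gramSchmidt_Iio 𝕜 f i, sub_eq_iff_eq_add'.2 (gramSchmidt_def'' 𝕜 f i)]
  exact Submodule.sum_mem _ fun j hj => Submodule.smul_mem _ _ <|
    Submodule.subset_span <| Set.mem_image_of_mem _ (Finset.mem_Iio.1 hj)

lemma inner_gramSchmidt_self (f : ι → X) (i : ι) :
    inner 𝕜 (gramSchmidt 𝕜 f i) (f i) = (‖gramSchmidt 𝕜 f i‖ : 𝕜) ^ 2 := by
  conv_lhs => rw [gramSchmidt_def'' 𝕜 f i]
  rw [inner_add_right, inner_self_eq_norm_sq_to_K, inner_sum, Finset.sum_eq_zero, add_zero]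
  intro j hj
  rw [inner_smul_right, gramSchmidt_orthogonal 𝕜 f (Finset.mem_Iio.1 hj).ne', mul_zero]

lemma inner_gramSchmidtNormed_self (f : ι → X) (i : ι) :
    inner 𝕜 (gramSchmidtNormed 𝕜 f i) (f i) = (‖gramSchmidt 𝕜 f i‖ : 𝕜) := by
  rw [gramSchmidtNormed, inner_smul_left, inner_gramSchmidt_self, pow_two, map_inv₀,
    RCLike.conj_ofReal, ← mul_assoc, inv_mul_mul_self]

lemma det_inner_gramSchmidtNormed (f : ι → X) (s : Finset ι) :
    (Matrix.of fun i j : s => inner 𝕜 (gramSchmidtNormed 𝕜 f i) (f j)).det =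
      ∏ i ∈ s, (‖gramSchmidt 𝕜 f i‖ : 𝕜) := by
  rw [Matrix.det_of_isUpperTriangular, ← Finset.prod_coe_sort s]
  · simp only [Matrix.of_apply, inner_gramSchmidtNormed_self]
  · intro i j hji
    rw [Matrix.of_apply, gramSchmidtNormed, inner_smul_left,
      gramSchmidt_inv_triangular 𝕜 f (show (j : ι) < i from hji), mul_zero]

end GramSchmidt

section Entropy

lemma entropyNumber_nonneg {X : Type*} [NormedAddCommGroup X] (n : ℕ) (K : Set X) :
    0 ≤ entropyNumber n K :=
  Real.sInf_nonneg fun _ hε => hε.1.le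

lemma exists_cover_of_entropyNumber_lt {X : Type*} [NormedAddCommGroup X] {n : ℕ} {K : Set X}
    (hK : Bornology.IsBounded K) {ε : ℝ} (hε : entropyNumber n K < ε) :
    ∃ c : Fin (2 ^ n) → X, K ⊆ ⋃ i, closedBall (c i) ε := by
  obtain ⟨R, hR, hKR⟩ := hK.subset_closedBall_lt 0 0
  have hcover : K ⊆ ⋃ _ : Fin (2 ^ n), closedBall 0 R := by rwa [Set.iUnion_const]
  have hne : {ε : ℝ | 0 < ε ∧ ∃ c : Fin (2 ^ n) → X, K ⊆ ⋃ i, closedBall (c i) ε}.Nonempty :=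
    ⟨R, hR, _, hcover⟩
  obtain ⟨δ, ⟨-, c, hc⟩, hδ⟩ := exists_lt_of_csInf_lt hne hε
  exact ⟨c, hc.trans (Set.iUnion_mono fun i => closedBall_subset_closedBall hδ.le)⟩

variable {X : Type*} [NormedAddCommGroup X] [InnerProductSpace ℝ X] {D : Set X}
  {ι : Type*} [LinearOrder ι] [LocallyFiniteOrderBot ι] [WellFoundedLT ι] {g : ι → X}

lemma prod_norm_gramSchmidt_le_of_subset_iUnion_closedBall {s : Finset ι} (hg : ∀ i ∈ s, g i ∈ D)
    {ε : ℝ} (hε : 0 ≤ ε) {c : Fin (2 ^ s.card) → X}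
    (hc : symConvexHull D ⊆ ⋃ i, closedBall (c i) ε) :
    ∏ i ∈ s, ‖gramSchmidt ℝ g i‖ ≤ s.card.factorial * unitBallVol s.card * ε ^ s.card := by
  have hV := unitBallVol_pos s.card
  by_cases hne : ∀ i ∈ s, gramSchmidt ℝ g i ≠ 0
  · have hne' (i : s) : gramSchmidtNormed ℝ g i ≠ 0 := by
      simpa [gramSchmidtNormed] using hne i i.2
    have he : Orthonormal ℝ fun i : s => gramSchmidtNormed ℝ g i :=
      (gramSchmidtNormed_orthonormal' g).comp (fun i : s => ⟨i, hne' i⟩)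
        fun i j hij => Subtype.ext (Subtype.mk.inj hij)
    have hdet := abs_det_mul_le_of_subset_iUnion_closedBall (norm_innerCoords_le he)
      (fun i : s => hg i i.2) hε hc
    have hminor : (Matrix.of fun i j : s =>
        innerCoords (fun i : s => gramSchmidtNormed ℝ g i) (g j) i).det =
        ∏ i ∈ s, ‖gramSchmidt ℝ g i‖ := det_inner_gramSchmidtNormed g s
    rw [hminor, abs_of_nonneg (by positivity), Fintype.card_coe, Nat.cast_pow,
      Nat.cast_ofNat] at hdet
    field_simp at hdet
    exact hdet.trans_eq (by ring)
  · push Not at hne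
    obtain ⟨i, hi, hgi⟩ := hne
    rw [Finset.prod_eq_zero hi (by rw [hgi, norm_zero])]
    positivity

lemma prod_norm_gramSchmidt_le_entropyNumber_pow (hD : Bornology.IsBounded (symConvexHull D))
    {s : Finset ι} (hg : ∀ i ∈ s, g i ∈ D) :
    ∏ i ∈ s, ‖gramSchmidt ℝ g i‖ ≤
      s.card.factorial * unitBallVol s.card * entropyNumber s.card (symConvexHull D) ^ s.card := by
  set E := entropyNumber s.card (symConvexHull D)
  have hcont : Continuous fun ε : ℝ => s.card.factorial * unitBallVol s.card * ε ^ s.card := by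
    fun_prop
  refine ge_of_tendsto (hcont.tendsto E |>.mono_left (nhdsWithin_le_nhds (s := Set.Ioi E)))
    (eventually_mem_nhdsWithin.mono fun ε hε => ?_)
  obtain ⟨c, hc⟩ := exists_cover_of_entropyNumber_lt hD hε
  exact prod_norm_gramSchmidt_le_of_subset_iUnion_closedBall hg
    ((entropyNumber_nonneg _ _).trans hε.le) hc

end Entropy

section RealInequalities

lemma inv_add_le_inv_of_le_sub_mul_sq {x y b : ℝ} (hx : 0 < x) (hy : 0 < y) (hb : 0 ≤ b)
    (h : y ≤ x - b * x ^ 2) : x⁻¹ + b ≤ y⁻¹ := by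
  rw [← one_div y, le_div_iff₀ hy]
  calc (x⁻¹ + b) * y ≤ (x⁻¹ + b) * (x - b * x ^ 2) := by gcongr
    _ = 1 - (b * x) ^ 2 := by field_simp; ring
    _ ≤ 1 := sub_le_self _ (sq_nonneg _)

lemma card_div_sum_inv_pow_le_prod {ι : Type*} {s : Finset ι} {z : ι → ℝ}
    (hz : ∀ i ∈ s, 0 < z i) : (s.card / ∑ i ∈ s, (z i)⁻¹) ^ s.card ≤ ∏ i ∈ s, z i := by
  rcases s.eq_empty_or_nonempty with rfl | hs
  · simp
  have hcard : (0 : ℝ) < s.card := by exact_mod_cast hs.card_pos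
  have hprod : 0 ≤ ∏ i ∈ s, z i := Finset.prod_nonneg fun i hi => (hz i hi).le
  have h := Real.harm_mean_le_geom_mean s hs (fun _ => 1) z (fun _ _ => one_pos)
    (by simpa using hcard) hz
  simp only [Finset.sum_const, nsmul_eq_mul, mul_one, one_div, Real.rpow_one] at h
  calc (s.card / ∑ i ∈ s, (z i)⁻¹) ^ s.card
      ≤ ((∏ i ∈ s, z i) ^ (s.card : ℝ)⁻¹) ^ s.card :=
        pow_le_pow_left₀ (div_nonneg hcard.le <|
          Finset.sum_nonneg fun i hi => inv_nonneg.2 (hz i hi).le) h _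
    _ = ∏ i ∈ s, z i := Real.rpow_inv_natCast_pow hprod hs.card_ne_zero

end RealInequalities

section VariationNorm

variable {X : Type*} [NormedAddCommGroup X] [NormedSpace ℝ X] {D : Set X} {f : X}

lemma varNorm_nonneg (D : Set X) (f : X) : 0 ≤ varNorm D f := by
  refine Real.sInf_nonneg ?_
  rintro _ ⟨c, g, -, -, -, rfl⟩
  exact tsum_nonneg fun i => abs_nonneg _

lemma norm_apply_le_varNorm_mul (hf : HasL1Rep D f) (φ : StrongDual ℝ X) {p : ℝ}
    (hφ : ∀ h ∈ D, ‖φ h‖ ≤ p) : ‖φ f‖ ≤ varNorm D f * p := by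
  obtain ⟨c₀, g₀, hg₀, hc₀, hf₀⟩ := hf
  have hp : 0 ≤ p := (norm_nonneg _).trans (hφ _ (hg₀ 0))
  rw [mul_comm, varNorm, ← smul_eq_mul, ← Real.sInf_smul_of_nonneg hp]
  refine le_csInf (Set.Nonempty.smul_set ⟨_, c₀, g₀, hg₀, hc₀, hf₀, rfl⟩) ?_
  rintro _ ⟨_, ⟨c, g, hg, hc, hsum, rfl⟩, rfl⟩
  refine (φ.hasSum hsum).norm_le_of_bounded (hc.hasSum.const_smul p) fun i => ?_
  rw [map_smul, norm_smul, Real.norm_eq_abs, smul_eq_mul, mul_comm]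
  exact mul_le_mul_of_nonneg_right (hφ _ (hg i)) (abs_nonneg _)

end VariationNorm

section Greedy

variable {X : Type*} [NormedAddCommGroup X] [InnerProductSpace ℝ X]

lemma norm_sub_le_of_inner_eq_zero {K : Submodule ℝ X} {u v w : X} (hv : v ∈ K)
    (h : ∀ z ∈ K, ⟪u - v, z⟫ = 0) (hw : w ∈ K) : ‖u - v‖ ≤ ‖u - w‖ := by
  rw [(K.norm_eq_iInf_iff_real_inner_eq_zero hv).2 h]
  exact ciInf_le ⟨0, Set.forall_mem_range.2 fun _ => norm_nonneg _⟩ (⟨w, hw⟩ : K)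

lemma norm_sub_inner_div_smul_sq (r u : X) :
    ‖r - (⟪u, r⟫ / ‖u‖ ^ 2) • u‖ ^ 2 = ‖r‖ ^ 2 - ⟪u, r⟫ ^ 2 / ‖u‖ ^ 2 := by
  rcases eq_or_ne u 0 with rfl | hu
  · simp
  have hu' : ‖u‖ ≠ 0 := norm_ne_zero_iff.2 hu
  rw [norm_sub_sq_real, inner_smul_right, real_inner_comm, norm_smul, mul_pow,
    Real.norm_eq_abs, sq_abs]
  field_simp
  ring

namespace IsOGA

variable {D : Set X} {f : X} {g fa : ℕ → X}

lemma mem_span (h : IsOGA D f g fa) (k : ℕ) : fa k ∈ Submodule.span ℝ (g '' Set.Iio k) := by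
  cases k with
  | zero => simp [h.1]
  | succ k => simpa [Set.Iio, Order.lt_add_one_iff] using (h.2 k).2.2.1

lemma inner_residual_eq_zero (h : IsOGA D f g fa) (k : ℕ) :
    ∀ w ∈ Submodule.span ℝ (g '' Set.Iio k), ⟪f - fa k, w⟫ = 0 := by
  cases k with
  | zero => simp
  | succ k => simpa [Set.Iio, Order.lt_add_one_iff] using (h.2 k).2.2.2

lemma norm_residual_antitone (h : IsOGA D f g fa) : Antitone fun k => ‖f - fa k‖ :=
  fun j k hjk => norm_sub_le_of_inner_eq_zero (h.mem_span k) (h.inner_residual_eq_zero k) <|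
    Submodule.span_mono (Set.image_mono (Set.Iio_subset_Iio hjk)) (h.mem_span j)

lemma inner_residual_gramSchmidt (h : IsOGA D f g fa) (k : ℕ) :
    ⟪f - fa k, gramSchmidt ℝ g k⟫ = ⟪f - fa k, g k⟫ := by
  rw [eq_comm, ← sub_eq_zero, ← inner_sub_right]
  exact h.inner_residual_eq_zero k _ (sub_gramSchmidt_mem_span g k)

lemma norm_residual_sq_le (h : IsOGA D f g fa) (hf : HasL1Rep D f) (k : ℕ) :
    ‖f - fa k‖ ^ 2 ≤ varNorm D f * |⟪gramSchmidt ℝ g k, f - fa k⟫| :=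
  calc ‖f - fa k‖ ^ 2 = ⟪f - fa k, f⟫ := by
        rw [← real_inner_self_eq_norm_sq, inner_sub_right,
          h.inner_residual_eq_zero k _ (h.mem_span k), sub_zero]
    _ ≤ ‖innerSL ℝ (f - fa k) f‖ := le_abs_self _
    _ ≤ varNorm D f * |⟪g k, f - fa k⟫| := norm_apply_le_varNorm_mul hf _ fun d hd => by
        rw [innerSL_apply_apply, real_inner_comm]
        exact (h.2 k).2.1 d hd
    _ = varNorm D f * |⟪gramSchmidt ℝ g k, f - fa k⟫| := by
        rw [real_inner_comm, ← h.inner_residual_gramSchmidt, real_inner_comm]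

lemma norm_residual_le (h : IsOGA D f g fa) (hf : HasL1Rep D f) (k : ℕ) :
    ‖f - fa k‖ ≤ varNorm D f * ‖gramSchmidt ℝ g k‖ := by
  have hM := varNorm_nonneg D f
  have hsq : ‖f - fa k‖ * ‖f - fa k‖ ≤ varNorm D f * ‖gramSchmidt ℝ g k‖ * ‖f - fa k‖ := by
    rw [← pow_two, mul_assoc]
    exact (h.norm_residual_sq_le hf k).trans <|
      mul_le_mul_of_nonneg_left (abs_real_inner_le_norm _ _) hM
  rcases (norm_nonneg (f - fa k)).eq_or_lt with hr | hr
  · rw [← hr]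
    positivity
  · exact le_of_mul_le_mul_right hsq hr

lemma norm_residual_succ_sq_le_sub_inner (h : IsOGA D f g fa) (k : ℕ) :
    ‖f - fa (k + 1)‖ ^ 2 ≤
      ‖f - fa k‖ ^ 2 - ⟪gramSchmidt ℝ g k, f - fa k⟫ ^ 2 / ‖gramSchmidt ℝ g k‖ ^ 2 := by
  set u := gramSchmidt ℝ g k
  have hu : u ∈ Submodule.span ℝ (g '' Set.Iio (k + 1)) :=
    Submodule.span_mono (Set.image_mono fun _ => Nat.lt_succ_of_le)
      (gramSchmidt_mem_span ℝ g le_rfl)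
  have hfa : fa k ∈ Submodule.span ℝ (g '' Set.Iio (k + 1)) :=
    Submodule.span_mono (Set.image_mono (Set.Iio_subset_Iio k.le_succ)) (h.mem_span k)
  rw [← norm_sub_inner_div_smul_sq, sub_sub]
  gcongr
  exact norm_sub_le_of_inner_eq_zero (h.mem_span _) (h.inner_residual_eq_zero _)
    (Submodule.add_mem _ hfa (Submodule.smul_mem _ _ hu))

lemma norm_residual_succ_sq_le (h : IsOGA D f g fa) (hf : HasL1Rep D f) (k : ℕ) :
    ‖f - fa (k + 1)‖ ^ 2 ≤
      ‖f - fa k‖ ^ 2 - ((varNorm D f * ‖gramSchmidt ℝ g k‖) ^ 2)⁻¹ * (‖f - fa k‖ ^ 2) ^ 2 := by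
  have hM := varNorm_nonneg D f
  have hratio : ‖f - fa k‖ ^ 2 / varNorm D f ≤ |⟪gramSchmidt ℝ g k, f - fa k⟫| :=
    div_le_of_le_mul₀ hM (abs_nonneg _) ((h.norm_residual_sq_le hf k).trans_eq (mul_comm _ _))
  refine (h.norm_residual_succ_sq_le_sub_inner k).trans (sub_le_sub_left ?_ _)
  rw [inv_mul_eq_div, mul_pow, ← div_div, ← div_pow, ← sq_abs ⟪_, _⟫]
  gcongr

lemma sum_inv_sq_le (h : IsOGA D f g fa) (hf : HasL1Rep D f) {n : ℕ} (hr : 0 < ‖f - fa n‖) :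
    ∑ k ∈ Finset.range n, ((varNorm D f * ‖gramSchmidt ℝ g k‖) ^ 2)⁻¹ ≤ (‖f - fa n‖ ^ 2)⁻¹ := by
  induction n with
  | zero => simp
  | succ k ih =>
    have hr' : 0 < ‖f - fa k‖ := hr.trans_le (h.norm_residual_antitone k.le_succ)
    rw [Finset.sum_range_succ]
    exact (add_le_add_left (ih hr') _).trans <| inv_add_le_inv_of_le_sub_mul_sq (by positivity)
      (by positivity) (by positivity) (h.norm_residual_succ_sq_le hf k)

lemma pow_sqrt_mul_norm_residual_le (h : IsOGA D f g fa) (hf : HasL1Rep D f) (n : ℕ) :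
    (√n * ‖f - fa n‖) ^ n ≤ varNorm D f ^ n * ∏ k ∈ Finset.range n, ‖gramSchmidt ℝ g k‖ := by
  have hM := varNorm_nonneg D f
  have hnonneg : 0 ≤ ∏ k ∈ Finset.range n, varNorm D f * ‖gramSchmidt ℝ g k‖ := by positivity
  suffices hprod : (√n * ‖f - fa n‖) ^ n ≤
      ∏ k ∈ Finset.range n, varNorm D f * ‖gramSchmidt ℝ g k‖ by
    simpa [Finset.prod_mul_distrib] using hprod
  rcases eq_or_ne n 0 with rfl | hn
  · simp
  rcases (norm_nonneg (f - fa n)).eq_or_lt with hr | hr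
  · rwa [← hr, mul_zero, zero_pow hn]
  have hpos (k) (hk : k ∈ Finset.range n) : 0 < varNorm D f * ‖gramSchmidt ℝ g k‖ :=
    (hr.trans_le (h.norm_residual_antitone (Finset.mem_range.1 hk).le)).trans_le
      (h.norm_residual_le hf k)
  have hsum_pos : 0 < ∑ k ∈ Finset.range n, ((varNorm D f * ‖gramSchmidt ℝ g k‖) ^ 2)⁻¹ :=
    Finset.sum_pos (fun k hk => inv_pos.2 (pow_pos (hpos k hk) 2)) (Finset.nonempty_range_iff.2 hn)
  refine (pow_le_pow_iff_left₀ (by positivity) hnonneg two_ne_zero).1 ?_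
  calc ((√n * ‖f - fa n‖) ^ n) ^ 2 = (n * ‖f - fa n‖ ^ 2) ^ n := by
        rw [pow_right_comm, mul_pow, Real.sq_sqrt n.cast_nonneg]
    _ ≤ (n / ∑ k ∈ Finset.range n, ((varNorm D f * ‖gramSchmidt ℝ g k‖) ^ 2)⁻¹) ^ n := by
        rw [div_eq_mul_inv]
        gcongr
        exact (le_inv_comm₀ hsum_pos (by positivity)).1 (h.sum_inv_sq_le hf hr)
    _ ≤ ∏ k ∈ Finset.range n, (varNorm D f * ‖gramSchmidt ℝ g k‖) ^ 2 := by
        simpa using card_div_sum_inv_pow_le_prod fun k hk => pow_pos (hpos k hk) 2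
    _ = (∏ k ∈ Finset.range n, varNorm D f * ‖gramSchmidt ℝ g k‖) ^ 2 :=
        Finset.prod_pow _ _ _

end IsOGA

end Greedy

theorem oga_error_le_entropy_general
    {X : Type*} [NormedAddCommGroup X] [InnerProductSpace ℝ X]
    (D : Set X) (hD : Bornology.IsBounded (symConvexHull D))
    (f : X) (hf : HasL1Rep D f)
    (g fa : ℕ → X) (hoga : IsOGA D f g fa) (n : ℕ) (hn : 1 ≤ n) :
    ‖f - fa n‖
      ≤ ((n.factorial : ℝ) * unitBallVol n) ^ ((n : ℝ)⁻¹) / Real.sqrt n *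
          varNorm D f * entropyNumber n (symConvexHull D) := by
  have hn0 : n ≠ 0 := Nat.one_le_iff_ne_zero.1 hn
  have hV := unitBallVol_pos n
  have hM := varNorm_nonneg D f
  have hE := entropyNumber_nonneg n (symConvexHull D)
  set C := ((n.factorial : ℝ) * unitBallVol n) ^ ((n : ℝ)⁻¹) with hC
  set E := entropyNumber n (symConvexHull D)
  have hprod : ∏ k ∈ Finset.range n, ‖gramSchmidt ℝ g k‖ ≤ n.factorial * unitBallVol n * E ^ n := by
    simpa using prod_norm_gramSchmidt_le_entropyNumber_pow hD
      (s := Finset.range n) fun k _ => (hoga.2 k).1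
  have hpow : (√n * ‖f - fa n‖) ^ n ≤ (C * varNorm D f * E) ^ n :=
    calc (√n * ‖f - fa n‖) ^ n
        ≤ varNorm D f ^ n * ∏ k ∈ Finset.range n, ‖gramSchmidt ℝ g k‖ :=
          hoga.pow_sqrt_mul_norm_residual_le hf n
      _ ≤ varNorm D f ^ n * (n.factorial * unitBallVol n * E ^ n) := by gcongr
      _ = (C * varNorm D f * E) ^ n := by
          rw [mul_pow, mul_pow, hC, Real.rpow_inv_natCast_pow (by positivity) hn0]
          ring
  have hroot : √n * ‖f - fa n‖ ≤ C * varNorm D f * E :=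
    (pow_le_pow_iff_left₀ (by positivity) (by positivity) hn0).1 hpow
  rw [div_mul_eq_mul_div, div_mul_eq_mul_div]
  exact (le_div_iff₀' (by positivity)).2 hroot

/-- direct entropy-based error bound for the orthogonal greedy algorithm
(Theorem 4.1 of the paper). -/
theorem oga_error_le_entropy
    {X : Type*} [NormedAddCommGroup X] [InnerProductSpace ℝ X] [CompleteSpace X]
    (D : Set X) (hD : IsCompact (symConvexHull D))
    (f : X) (hf : HasL1Rep D f)
    (g fa : ℕ → X) (hoga : IsOGA D f g fa) (n : ℕ) (hn : 1 ≤ n) :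
    ‖f - fa n‖
      ≤ ((n.factorial : ℝ) * unitBallVol n) ^ ((n : ℝ)⁻¹) / Real.sqrt n *
          varNorm D f * entropyNumber n (symConvexHull D) :=
  oga_error_le_entropy_general D hD.isBounded f hf g fa hoga n hn
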